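/- arXiv:1309.2038 — 12 statements merged into one kernel-verified Lean document; each statement's English description precedes it below -/
import Mathlib

section
/- Let E be a finite set, w : E → ℝ a nonnegative weight function, γ > 0 a real number, and T a natural number. Suppose I₀ = ∅ and for each t ∈ {1,…,T} we have I_t = (I_{t−1} \ J_t) ∪ A_t, where J_t ⊆ I_{t−1}, A_t ⊆ E with A_t ∩ (I_{t−1} \ J_t) = ∅, and ∑_{e∈A_t} w(e) ≥ (1+γ)·∑_{e∈J_t} w(e). Let K = (⋃_{t=0}^{T} I_t) \ I_T. Then ∑_{e∈K} w(e) ≤ (1/γ)·∑_{e∈I_T} w(e). -/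
/-- Lemma 3.1 (combinatorial form): in any sequence of augmentation steps in
which a subset `J t` of the current solution is replaced by a set `A t` of
weight at least `(1+γ)` times the weight of `J t`, the total weight of elements
that were ever in the solution but are absent from the final solution is at
most `1/γ` times the weight of the final solution. -/
theorem stmt_0 {α : Type*} [Fintype α] [DecidableEq α]
    (w : α → ℝ) (hw : ∀ e, 0 ≤ w e)
    (γ : ℝ) (hγ : 0 < γ) (T : ℕ)
    (I J A : ℕ → Finset α)
    (hI0 : I 0 = ∅)
    (hJ : ∀ t, 1 ≤ t → t ≤ T → J t ⊆ I (t - 1))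
    (hA : ∀ t, 1 ≤ t → t ≤ T → A t ∩ (I (t - 1) \ J t) = ∅)
    (hstep : ∀ t, 1 ≤ t → t ≤ T → I t = (I (t - 1) \ J t) ∪ A t)
    (hgain : ∀ t, 1 ≤ t → t ≤ T →
      (1 + γ) * ∑ e ∈ J t, w e ≤ ∑ e ∈ A t, w e) :
    ∑ e ∈ ((Finset.range (T + 1)).biUnion (fun t => I t)) \ I T, w e
      ≤ (1 / γ) * ∑ e ∈ I T, w e := by
  have key : ∀ n, n ≤ T →
      γ * ∑ e ∈ ((Finset.range (n + 1)).biUnion (fun t => I t)) \ I n, w e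
        ≤ ∑ e ∈ I n, w e := by
    intro n
    induction n with
    | zero => intro _; simp [hI0]
    | succ n ih =>
      intro hn
      have ih := ih (by omega)
      have h1 := hJ (n + 1) (by omega) hn
      have h2 := hA (n + 1) (by omega) hn
      have h3 := hstep (n + 1) (by omega) hn
      have h4 := hgain (n + 1) (by omega) hn
      simp only [Nat.add_sub_cancel] at h1 h2 h3
      have hd : Disjoint (I n \ J (n + 1)) (A (n + 1)) := by
        rw [disjoint_comm, Finset.disjoint_iff_inter_eq_empty]
        exact h2
      have e1 : ∑ e ∈ I (n + 1), w e
          = ∑ e ∈ I n \ J (n + 1), w e + ∑ e ∈ A (n + 1), w e := by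
        rw [h3, Finset.sum_union hd]
      have e2 := Finset.sum_sdiff (f := w) h1
      have hsub : ((Finset.range (n + 1 + 1)).biUnion (fun t => I t)) \ I (n + 1)
          ⊆ (((Finset.range (n + 1)).biUnion (fun t => I t)) \ I n) ∪ J (n + 1) := by
        intro x hx
        rw [Finset.range_add_one, Finset.biUnion_insert] at hx
        simp only [Finset.mem_sdiff, Finset.mem_union] at hx ⊢
        obtain ⟨hx1, hx2⟩ := hx
        have hx3 := hx1.resolve_left hx2
        by_cases hxJ : x ∈ J (n + 1)
        · exact Or.inr hxJ
        · refine Or.inl ⟨hx3, fun hxI => hx2 ?_⟩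
          rw [h3]
          simp [hxI, hxJ]
      have e3 := Finset.sum_le_sum_of_subset_of_nonneg hsub (fun e _ _ => hw e)
      have e4 := Finset.sum_union_inter (f := w)
        (s₁ := ((Finset.range (n + 1)).biUnion (fun t => I t)) \ I n) (s₂ := J (n + 1))
      have e5 : 0 ≤ ∑ e ∈ (((Finset.range (n + 1)).biUnion (fun t => I t)) \ I n)
          ∩ J (n + 1), w e := Finset.sum_nonneg (fun e _ => hw e)
      have e6 := mul_le_mul_of_nonneg_left (e3.trans (by linarith : _ ≤
        ∑ e ∈ ((Finset.range (n + 1)).biUnion (fun t => I t)) \ I n, w e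
          + ∑ e ∈ J (n + 1), w e)) hγ.le
      linarith
  have := key T le_rfl
  rw [one_div, inv_mul_eq_div, le_div_iff₀ hγ]
  linarith
end

section
/- Under the stream setup, if I ⊆ E satisfies {e' ∈ I : e' < e} ⊆ C(e) for every e ∈ I, then w(I) ≤ f(I). -/
/-- Lemma 3.2 (combinatorial form): under the stream setup, if every earlier
element of `I` is in `C e` for every `e ∈ I`, then `w(I) ≤ f(I)`, where
`w(e) := f(C(e) ∪ {e}) − f(C(e))`. -/
theorem stmt_1 {α : Type*} [Fintype α] [LinearOrder α]
    (f : Finset α → ℝ)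
    (hsub : ∀ A B : Finset α, f (A ∪ B) + f (A ∩ B) ≤ f A + f B)
    (hmono : ∀ A B : Finset α, A ⊆ B → f A ≤ f B)
    (hproper : f ∅ = 0)
    (hnonneg : ∀ A : Finset α, 0 ≤ f A)
    (C : α → Finset α)
    (hC : ∀ e, ∀ e' ∈ C e, e' < e)
    (I : Finset α)
    (hI : ∀ e ∈ I, I.filter (fun e' => e' < e) ⊆ C e) :
    ∑ e ∈ I, (f (insert e (C e)) - f (C e)) ≤ f I := by
  induction I using Finset.induction_on_max with
  | empty => simp [hproper]
  | insert a s hs ih =>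
    have ha : a ∉ s := fun h => lt_irrefl _ (hs a h)
    have haC : a ∉ C a := fun h => lt_irrefl _ (hC a a h)
    have hsC : s ⊆ C a := by
      intro x hx
      exact hI a (Finset.mem_insert_self a s)
        (Finset.mem_filter.2 ⟨Finset.mem_insert_of_mem hx, hs x hx⟩)
    have h1 := ih (by
      intro e he x hx
      rw [Finset.mem_filter] at hx
      exact hI e (Finset.mem_insert_of_mem he)
        (Finset.mem_filter.2 ⟨Finset.mem_insert_of_mem hx.1, hx.2⟩))
    have h2 := hsub (insert a s) (C a)
    rw [Finset.insert_union, Finset.union_eq_right.2 hsC,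
      Finset.insert_inter_of_notMem haC, Finset.inter_eq_left.2 hsC] at h2
    rw [Finset.sum_insert ha]
    linarith
end

section
/- Under the stream setup, if B ⊆ E satisfies C(e) ⊆ {e' ∈ B : e' < e} for every e ∈ B, then f(B) ≤ w(B). -/
/-- First inequality in the proof of Lemma 3.3: under the stream setup, if
`C e` consists only of earlier elements of `B` for every `e ∈ B`, then
`f(B) ≤ w(B)`, where `w(e) := f(C(e) ∪ {e}) − f(C(e))`. -/
theorem stmt_2 {α : Type*} [Fintype α] [LinearOrder α]
    (f : Finset α → ℝ)
    (hsub : ∀ A B : Finset α, f (A ∪ B) + f (A ∩ B) ≤ f A + f B)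
    (hmono : ∀ A B : Finset α, A ⊆ B → f A ≤ f B)
    (hproper : f ∅ = 0)
    (hnonneg : ∀ A : Finset α, 0 ≤ f A)
    (C : α → Finset α)
    (hC : ∀ e, ∀ e' ∈ C e, e' < e)
    (B : Finset α)
    (hB : ∀ e ∈ B, C e ⊆ B.filter (fun e' => e' < e)) :
    f B ≤ ∑ e ∈ B, (f (insert e (C e)) - f (C e)) := by
  induction B using Finset.induction_on_max with
  | empty => simp [hproper]
  | insert a s ha ih =>
    have has : a ∉ s := fun h => lt_irrefl a (ha a h)
    rw [Finset.sum_insert has]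
    have h1 := ih (by
      intro e he x hx
      have h2 := hB e (Finset.mem_insert_of_mem he) hx
      rw [Finset.mem_filter, Finset.mem_insert] at h2
      rw [Finset.mem_filter]
      rcases h2 with ⟨rfl | h, h3⟩
      · exact absurd h3 (lt_asymm (ha e he))
      · exact ⟨h, h3⟩)
    have hCs : C a ⊆ s := by
      intro x hx
      have h2 := hB a (Finset.mem_insert_self a s) hx
      rw [Finset.mem_filter, Finset.mem_insert] at h2
      rcases h2 with ⟨rfl | h, h3⟩
      · exact absurd h3 (lt_irrefl _)
      · exact h
    have h4 := hsub (insert a (C a)) s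
    rw [Finset.insert_union, Finset.union_eq_right.mpr hCs,
      Finset.insert_inter_of_notMem has, Finset.inter_eq_left.mpr hCs] at h4
    linarith
end

section
/- Let E be a finite type, f : Finset E → ℝ a nonnegative monotone proper submodular function, and B, T ⊆ E. Suppose that for each e ∈ T \ B a set C(e) ⊆ B with e ∉ C(e) is given. Then f(T) ≤ f(B) + ∑_{e ∈ T\B} (f(C(e) ∪ {e}) − f(C(e))). -/
/-- Inequality (6.2) in the proof of Lemma 3.3: the `f`-value of any set `T`
exceeds `f(B)` by at most the sum of the marginal gains of the elements of
`T \ B` measured relative to subsets `C e ⊆ B`. -/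
theorem stmt_3 {α : Type*} [Fintype α] [DecidableEq α]
    (f : Finset α → ℝ)
    (hsub : ∀ A B : Finset α, f (A ∪ B) + f (A ∩ B) ≤ f A + f B)
    (hmono : ∀ A B : Finset α, A ⊆ B → f A ≤ f B)
    (hproper : f ∅ = 0)
    (hnonneg : ∀ A : Finset α, 0 ≤ f A)
    (B T : Finset α) (C : α → Finset α)
    (hCB : ∀ e ∈ T \ B, C e ⊆ B)
    (hCe : ∀ e ∈ T \ B, e ∉ C e) :
    f T ≤ f B + ∑ e ∈ T \ B, (f (insert e (C e)) - f (C e)) := by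
  have key : ∀ S : Finset α, S ⊆ T \ B →
      f (B ∪ S) ≤ f B + ∑ e ∈ S, (f (insert e (C e)) - f (C e)) := by
    intro S
    induction S using Finset.induction_on with
    | empty => intro _; simp
    | insert a S ha ih =>
      intro hS
      have h1 := ih ((Finset.subset_insert a S).trans hS)
      have haT : a ∈ T \ B := hS (Finset.mem_insert_self a S)
      have haB : a ∉ B := (Finset.mem_sdiff.mp haT).2
      have hC := hCB a haT
      have h2 := hsub (B ∪ S) (insert a (C a))
      have e1 : (B ∪ S) ∪ insert a (C a) = B ∪ insert a S := by
        ext x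
        have := @hC x
        simp only [Finset.mem_union, Finset.mem_insert]
        tauto
      have e2 : (B ∪ S) ∩ insert a (C a) = C a := by
        ext x
        have := @hC x
        simp only [Finset.mem_union, Finset.mem_insert, Finset.mem_inter]
        constructor
        · rintro ⟨h, rfl | h'⟩
          · tauto
          · exact h'
        · tauto
      rw [e1, e2] at h2
      rw [Finset.sum_insert ha]
      linarith
  refine (hmono T (B ∪ (T \ B)) ?_).trans (key _ (Finset.Subset.refl _))
  intro x hx
  simp only [Finset.mem_union, Finset.mem_sdiff]
  tauto
end

section
/- Under the stream setup, let I, K ⊆ E be disjoint, put B := I ∪ K, and let γ > 0. Suppose (i) C(e) ⊆ {e' ∈ B : e' < e} for every e ∈ E, (ii) {e' ∈ I : e' < e} ⊆ C(e) for every e ∈ I, and (iii) w(K) ≤ w(I)/γ. Then for every T ⊆ E, f(T) ≤ (1 + 1/γ)·f(I) + w(T). -/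
theorem marg_le {α : Type*} [LinearOrder α] (f : Finset α → ℝ)
    (hsub : ∀ A B : Finset α, f (A ∪ B) + f (A ∩ B) ≤ f A + f B)
    (hmono : ∀ A B : Finset α, A ⊆ B → f A ≤ f B)
    (A S : Finset α) (h : A ⊆ S) (e : α) :
    f (insert e S) - f S ≤ f (insert e A) - f A := by
  by_cases he : e ∈ S
  · rw [Finset.insert_eq_of_mem he]
    have := hmono A (insert e A) (Finset.subset_insert _ _)
    linarith
  · have h1 := hsub (insert e A) S
    have h2 : insert e A ∪ S = insert e S := by
      ext x
      have := @h x
      simp only [Finset.mem_union, Finset.mem_insert]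
      tauto
    have h3 : insert e A ∩ S = A := by
      ext x
      have := @h x
      simp only [Finset.mem_inter, Finset.mem_insert]
      constructor
      · rintro ⟨rfl | hx, hS⟩
        · exact absurd hS he
        · exact hx
      · intro hx
        exact ⟨Or.inr hx, h hx⟩
    rw [h2, h3] at h1
    linarith

theorem chain_le {α : Type*} [LinearOrder α] (f : Finset α → ℝ)
    (hsub : ∀ A B : Finset α, f (A ∪ B) + f (A ∩ B) ≤ f A + f B)
    (hmono : ∀ A B : Finset α, A ⊆ B → f A ≤ f B)
    (C : α → Finset α) (S J : Finset α)
    (h : ∀ e ∈ J, ∀ x ∈ C e, x ∈ S ∨ (x ∈ J ∧ x < e)) :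
    f (S ∪ J) ≤ f S + ∑ e ∈ J, (f (insert e (C e)) - f (C e)) := by
  induction J using Finset.induction_on_max with
  | empty => simp
  | insert a s hs ih =>
    have ha : a ∉ s := fun h => lt_irrefl _ (hs a h)
    have ih' := ih (by
      intro e he x hx
      rcases h e (Finset.mem_insert_of_mem he) x hx with h1 | ⟨h1, h2⟩
      · exact Or.inl h1
      · rcases Finset.mem_insert.1 h1 with rfl | h1
        · exact absurd h2 (hs e he).not_gt
        · exact Or.inr ⟨h1, h2⟩)
    have hm := marg_le f hsub hmono (C a) (S ∪ s) (by
      intro x hx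
      rcases h a (Finset.mem_insert_self _ _) x hx with h1 | ⟨h1, h2⟩
      · exact Finset.mem_union_left _ h1
      · rcases Finset.mem_insert.1 h1 with rfl | h1
        · exact absurd h2 (lt_irrefl _)
        · exact Finset.mem_union_right _ h1) a
    rw [Finset.sum_insert ha, Finset.union_insert]
    linarith

theorem chain_ge {α : Type*} [LinearOrder α] (f : Finset α → ℝ)
    (hsub : ∀ A B : Finset α, f (A ∪ B) + f (A ∩ B) ≤ f A + f B)
    (hmono : ∀ A B : Finset α, A ⊆ B → f A ≤ f B)
    (hproper : f ∅ = 0)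
    (C : α → Finset α) (J : Finset α)
    (h : ∀ e ∈ J, ∀ x ∈ J, x < e → x ∈ C e) :
    ∑ e ∈ J, (f (insert e (C e)) - f (C e)) ≤ f J := by
  induction J using Finset.induction_on_max with
  | empty => simp [hproper]
  | insert a s hs ih =>
    have ha : a ∉ s := fun h => lt_irrefl _ (hs a h)
    have ih' := ih (fun e he x hx => h e (Finset.mem_insert_of_mem he) x
      (Finset.mem_insert_of_mem hx))
    have hm := marg_le f hsub hmono s (C a) (fun x hx =>
      h a (Finset.mem_insert_self _ _) x (Finset.mem_insert_of_mem hx) (hs x hx)) a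
    rw [Finset.sum_insert ha]
    linarith

/-- Lemma 3.3 (combinatorial form): under the stream setup, with `I` the output
solution, `K` the killed elements, `B = I ∪ K`, `w(K) ≤ w(I)/γ`, for every set
`T` we have `f(T) ≤ (1 + 1/γ)·f(I) + w(T)`, where
`w(e) := f(C(e) ∪ {e}) − f(C(e))` and `w(A) := ∑_{e∈A} w(e)`. -/
theorem stmt_4 {α : Type*} [Fintype α] [LinearOrder α]
    (f : Finset α → ℝ)
    (hsub : ∀ A B : Finset α, f (A ∪ B) + f (A ∩ B) ≤ f A + f B)
    (hmono : ∀ A B : Finset α, A ⊆ B → f A ≤ f B)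
    (hproper : f ∅ = 0)
    (hnonneg : ∀ A : Finset α, 0 ≤ f A)
    (C : α → Finset α)
    (hC : ∀ e, ∀ e' ∈ C e, e' < e)
    (I K : Finset α) (hdisj : Disjoint I K)
    (γ : ℝ) (hγ : 0 < γ)
    (hCB : ∀ e : α, C e ⊆ (I ∪ K).filter (fun e' => e' < e))
    (hI : ∀ e ∈ I, I.filter (fun e' => e' < e) ⊆ C e)
    (hK : ∑ e ∈ K, (f (insert e (C e)) - f (C e))
        ≤ (∑ e ∈ I, (f (insert e (C e)) - f (C e))) / γ)
    (T : Finset α) :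
    f T ≤ (1 + 1 / γ) * f I + ∑ e ∈ T, (f (insert e (C e)) - f (C e)) := by
  have h1 := chain_le f hsub hmono C (I ∪ K) T
    (fun e _ x hx => Or.inl (Finset.mem_filter.1 (hCB e hx)).1)
  have h2 := chain_le f hsub hmono C I K (fun e _ x hx => by
    have h := Finset.mem_filter.1 (hCB e hx)
    rcases Finset.mem_union.1 h.1 with h3 | h3
    · exact Or.inl h3
    · exact Or.inr ⟨h3, h.2⟩)
  have h3 := chain_ge f hsub hmono hproper C I
    (fun e he x hx hlt => hI e he (Finset.mem_filter.2 ⟨hx, hlt⟩))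
  have h4 := hmono T (I ∪ K ∪ T) Finset.subset_union_right
  have h5 := div_le_div_of_nonneg_right h3 hγ.le
  have h6 : (1 + 1 / γ) * f I = f I + f I / γ := by ring
  rw [h6]
  linarith
end

section
/- Under the stream setup, let I, K ⊆ E be disjoint, put B := I ∪ K, and let γ > 0. Suppose (i) C(e) ⊆ {e' ∈ B : e' < e} for every e ∈ B, (ii) {e' ∈ I : e' < e} ⊆ C(e) for every e ∈ I, and (iii) w(K) ≤ w(I)/γ. Then f(I ∪ K) ≤ (1 + 1/γ)·f(I). -/
theorem tele_aux {α : Type*} [LinearOrder α] (f : Finset α → ℝ) (hproper : f ∅ = 0)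
    (S : Finset α) :
    ∑ e ∈ S, (f (insert e (S.filter (fun e' => e' < e))) - f (S.filter (fun e' => e' < e)))
      = f S := by
  induction S using Finset.induction_on_max with
  | empty => simp [hproper]
  | insert a s ha ih =>
    have hna : a ∉ s := fun h => lt_irrefl _ (ha a h)
    rw [Finset.sum_insert hna]
    have h1 : (insert a s).filter (fun e' => e' < a) = s := by
      ext x
      simp only [Finset.mem_filter, Finset.mem_insert]
      constructor
      · rintro ⟨rfl | h, h2⟩
        · exact absurd h2 (lt_irrefl _)
        · exact h
      · exact fun h => ⟨Or.inr h, ha x h⟩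
    have h2 : ∀ e ∈ s, (insert a s).filter (fun e' => e' < e) = s.filter (fun e' => e' < e) := by
      intro e he
      rw [Finset.filter_insert, if_neg (not_lt.mpr (ha e he).le)]
    rw [h1, Finset.sum_congr rfl (fun e he => by rw [h2 e he]), ih]
    ring

theorem marg_aux {α : Type*} [LinearOrder α] (f : Finset α → ℝ)
    (hsub : ∀ A B : Finset α, f (A ∪ B) + f (A ∩ B) ≤ f A + f B)
    (X Y : Finset α) (e : α) (hXY : X ⊆ Y) (he : e ∉ Y) :
    f (insert e Y) - f Y ≤ f (insert e X) - f X := by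
  have h := hsub (insert e X) Y
  rw [Finset.insert_union, Finset.union_eq_right.mpr hXY,
    Finset.insert_inter_of_notMem he, Finset.inter_eq_left.mpr hXY] at h
  linarith

/-- Inequality (6.1) in the proof of Lemma 3.3: under the stream setup, with
`I` the output solution, `K` the killed elements, `B = I ∪ K`, and
`w(K) ≤ w(I)/γ`, we have `f(I ∪ K) ≤ (1 + 1/γ)·f(I)`, where
`w(e) := f(C(e) ∪ {e}) − f(C(e))`. -/
theorem stmt_5 {α : Type*} [Fintype α] [LinearOrder α]
    (f : Finset α → ℝ)
    (hsub : ∀ A B : Finset α, f (A ∪ B) + f (A ∩ B) ≤ f A + f B)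
    (hmono : ∀ A B : Finset α, A ⊆ B → f A ≤ f B)
    (hproper : f ∅ = 0)
    (hnonneg : ∀ A : Finset α, 0 ≤ f A)
    (C : α → Finset α)
    (hC : ∀ e, ∀ e' ∈ C e, e' < e)
    (I K : Finset α) (hdisj : Disjoint I K)
    (γ : ℝ) (hγ : 0 < γ)
    (hCB : ∀ e ∈ I ∪ K, C e ⊆ (I ∪ K).filter (fun e' => e' < e))
    (hI : ∀ e ∈ I, I.filter (fun e' => e' < e) ⊆ C e)
    (hK : ∑ e ∈ K, (f (insert e (C e)) - f (C e))
        ≤ (∑ e ∈ I, (f (insert e (C e)) - f (C e))) / γ) :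
    f (I ∪ K) ≤ (1 + 1 / γ) * f I := by
  have hB : f (I ∪ K) ≤ ∑ e ∈ I ∪ K, (f (insert e (C e)) - f (C e)) := by
    rw [← tele_aux f hproper (I ∪ K)]
    exact Finset.sum_le_sum fun e he => marg_aux f hsub _ _ e (hCB e he) (by simp)
  have hI' : ∑ e ∈ I, (f (insert e (C e)) - f (C e)) ≤ f I := by
    conv_rhs => rw [← tele_aux f hproper I]
    exact Finset.sum_le_sum fun e he =>
      marg_aux f hsub _ _ e (hI e he) (fun h => lt_irrefl _ (hC e e h))
  rw [Finset.sum_union hdisj] at hB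
  have h3 := div_le_div_of_nonneg_right hI' hγ.le
  have h4 : (1 + 1 / γ) * f I = f I + f I / γ := by ring
  linarith
end

section
/- Under the stream setup, let I, K ⊆ E be disjoint, put B := I ∪ K, let γ > 0 and F ≥ 0 be reals, and let T ⊆ E. Suppose (i) C(e) ⊆ {e' ∈ B : e' < e} for every e ∈ E, (ii) {e' ∈ I : e' < e} ⊆ C(e) for every e ∈ I, (iii) w(K) ≤ w(I)/γ, and (iv) w(T) ≤ F·w(I). Then f(T) ≤ (F + 1 + 1/γ)·f(I). -/
/-- Lemma 2.2 (combinatorial form, modular to submodular): the `f`-extension of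
an `F`-approximate compliant algorithm with parameter `γ` computes an
`(F + 1 + 1/γ)`-approximate maximum submodular independent set. Here `I` is the
output, `K` the killed elements, `T` an optimal solution, and
`w(e) := f(C(e) ∪ {e}) − f(C(e))`. -/
theorem stmt_6 {α : Type*} [Fintype α] [LinearOrder α]
    (f : Finset α → ℝ)
    (hsub : ∀ A B : Finset α, f (A ∪ B) + f (A ∩ B) ≤ f A + f B)
    (hmono : ∀ A B : Finset α, A ⊆ B → f A ≤ f B)
    (hproper : f ∅ = 0)
    (hnonneg : ∀ A : Finset α, 0 ≤ f A)
    (C : α → Finset α)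
    (hC : ∀ e, ∀ e' ∈ C e, e' < e)
    (I K : Finset α) (hdisj : Disjoint I K)
    (γ F : ℝ) (hγ : 0 < γ) (hF : 0 ≤ F)
    (T : Finset α)
    (hCB : ∀ e : α, C e ⊆ (I ∪ K).filter (fun e' => e' < e))
    (hI : ∀ e ∈ I, I.filter (fun e' => e' < e) ⊆ C e)
    (hK : ∑ e ∈ K, (f (insert e (C e)) - f (C e))
        ≤ (∑ e ∈ I, (f (insert e (C e)) - f (C e))) / γ)
    (hT : ∑ e ∈ T, (f (insert e (C e)) - f (C e))
        ≤ F * ∑ e ∈ I, (f (insert e (C e)) - f (C e))) :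
    f T ≤ (F + 1 + 1 / γ) * f I := by
  classical
  have dim : ∀ (A D : Finset α) (e : α), A ⊆ D →
      f (insert e D) - f D ≤ f (insert e A) - f A := by
    intro A D e hAD
    by_cases he : e ∈ D
    · rw [Finset.insert_eq_of_mem he]
      have := hmono A (insert e A) (Finset.subset_insert _ _)
      linarith
    · have h := hsub (insert e A) D
      have h1 : insert e A ∪ D = insert e D := by
        rw [Finset.insert_union, Finset.union_eq_right.mpr hAD]
      have h2 : insert e A ∩ D = A := by
        rw [Finset.insert_inter_of_notMem he, Finset.inter_eq_left.mpr hAD]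
      rw [h1, h2] at h
      linarith
  have up : ∀ S : Finset α, f ((I ∪ K) ∪ S) ≤
      f (I ∪ K) + ∑ e ∈ S, (f (insert e (C e)) - f (C e)) := by
    intro S
    induction S using Finset.induction_on with
    | empty => simp
    | insert a s ha ih =>
      rw [Finset.sum_insert ha, Finset.union_insert]
      have := dim (C a) ((I ∪ K) ∪ s) a
        (((hCB a).trans (Finset.filter_subset _ _)).trans Finset.subset_union_left)
      linarith
  have hB : ∀ S : Finset α, (∀ e ∈ S, C e ⊆ S) →
      f S ≤ ∑ e ∈ S, (f (insert e (C e)) - f (C e)) := by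
    intro S
    induction S using Finset.induction_on_max with
    | empty => simp [hproper]
    | insert a s ha ih =>
      intro hS
      have hna : a ∉ s := fun h => lt_irrefl _ (ha a h)
      have key : ∀ e ∈ insert a s, C e ⊆ s := by
        intro e he x hx
        have hlt := hC e x hx
        rcases Finset.mem_insert.mp (hS e he hx) with rfl | h
        · rcases Finset.mem_insert.mp he with rfl | h'
          · exact absurd hlt (lt_irrefl _)
          · exact absurd hlt (ha e h').asymm
        · exact h
      rw [Finset.sum_insert hna]
      have h1 := ih (fun e he => key e (Finset.mem_insert_of_mem he))
      have h2 := dim (C a) s a (key a (Finset.mem_insert_self _ _))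
      linarith
  have hL : ∀ S : Finset α, (∀ e ∈ S, S.filter (fun e' => e' < e) ⊆ C e) →
      ∑ e ∈ S, (f (insert e (C e)) - f (C e)) ≤ f S := by
    intro S
    induction S using Finset.induction_on_max with
    | empty => simp [hproper]
    | insert a s ha ih =>
      intro hS
      have hna : a ∉ s := fun h => lt_irrefl _ (ha a h)
      rw [Finset.sum_insert hna]
      have h1 := ih (fun e he => (Finset.filter_subset_filter _
        (Finset.subset_insert _ _)).trans (hS e (Finset.mem_insert_of_mem he)))
      have h2 := dim s (C a) a (fun x hx => hS a (Finset.mem_insert_self _ _)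
        (Finset.mem_filter.mpr ⟨Finset.mem_insert_of_mem hx, ha x hx⟩))
      linarith
  have a1 := hmono T ((I ∪ K) ∪ T) Finset.subset_union_right
  have a2 := up T
  have a3 := hB (I ∪ K) (fun e _ => (hCB e).trans (Finset.filter_subset _ _))
  rw [Finset.sum_union hdisj] at a3
  have a4 := hL I hI
  have hc : 0 ≤ F + 1 + 1 / γ := by positivity
  have a5 := mul_le_mul_of_nonneg_left a4 hc
  refine le_trans ?_ a5
  rw [add_mul, add_mul, one_mul, one_div_mul_eq_div]
  linarith
end

section
/- Let E be a finite type, f : Finset E → ℝ a nonnegative monotone proper submodular function, and c a real with 0 ≤ c < 1. Suppose f(A ∪ {e}) − f(A) ≥ (1 − c)·f({e}) for every A ⊆ E and every e ∉ A. Then for every S ⊆ E and every assignment of a set C(e) ⊆ E with e ∉ C(e) to each e ∈ S, (1 − c)·f(S) ≤ ∑_{e∈S} (f(C(e) ∪ {e}) − f(C(e))). -/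
/-- Key inequality in the proof of Lemma 3.4: under the curvature condition
with parameter `c`, for any set `S` and any assignment of a set `C e` (with
`e ∉ C e`) to each `e ∈ S`, `(1 − c)·f(S) ≤ ∑_{e∈S} (f(C(e) ∪ {e}) − f(C(e)))`. -/
theorem stmt_7 {α : Type*} [Fintype α] [DecidableEq α]
    (f : Finset α → ℝ)
    (hsub : ∀ A B : Finset α, f (A ∪ B) + f (A ∩ B) ≤ f A + f B)
    (hmono : ∀ A B : Finset α, A ⊆ B → f A ≤ f B)
    (hproper : f ∅ = 0)
    (hnonneg : ∀ A : Finset α, 0 ≤ f A)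
    (c : ℝ) (hc0 : 0 ≤ c) (hc1 : c < 1)
    (hcurv : ∀ (A : Finset α) (e : α), e ∉ A →
      (1 - c) * f {e} ≤ f (insert e A) - f A)
    (S : Finset α) (C : α → Finset α)
    (hCe : ∀ e ∈ S, e ∉ C e) :
    (1 - c) * f S ≤ ∑ e ∈ S, (f (insert e (C e)) - f (C e)) := by
  have key : ∀ T : Finset α, f T ≤ ∑ e ∈ T, f {e} := by
    intro T
    induction T using Finset.induction_on with
    | empty => simp [hproper]
    | insert a T ha ih =>
      rw [Finset.sum_insert ha]
      have h := hsub {a} T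
      have h2 := hnonneg ({a} ∩ T)
      rw [← Finset.insert_eq] at h
      linarith
  calc (1 - c) * f S ≤ (1 - c) * ∑ e ∈ S, f {e} :=
        mul_le_mul_of_nonneg_left (key S) (by linarith)
    _ = ∑ e ∈ S, (1 - c) * f {e} := Finset.mul_sum _ _ _
    _ ≤ _ := Finset.sum_le_sum fun e he => hcurv (C e) e (hCe e he)
end

section
/- Under the stream setup, let I, K ⊆ E be disjoint, put B := I ∪ K, let γ > 0, F ≥ 0 and 0 ≤ c < 1 be reals, and let T ⊆ E. Suppose (i) C(e) ⊆ {e' ∈ B : e' < e} for every e ∈ E, (ii) {e' ∈ I : e' < e} ⊆ C(e) for every e ∈ I, (iii) w(K) ≤ w(I)/γ, (iv) w(T) ≤ F·w(I), and (v) f(A ∪ {e}) − f(A) ≥ (1 − c)·f({e}) for every A ⊆ E and e ∉ A. Then f(T) ≤ min{F + 1 + 1/γ, F/(1 − c)}·f(I). -/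
theorem aux_dim {α : Type*} [LinearOrder α] (f : Finset α → ℝ)
    (hsub : ∀ A B : Finset α, f (A ∪ B) + f (A ∩ B) ≤ f A + f B)
    (hmono : ∀ A B : Finset α, A ⊆ B → f A ≤ f B)
    (X Y : Finset α) (h : X ⊆ Y) (e : α) :
    f (insert e Y) - f Y ≤ f (insert e X) - f X := by
  by_cases he : e ∈ Y
  · rw [Finset.insert_eq_of_mem he]
    linarith [hmono _ _ (Finset.subset_insert e X)]
  · have h1 := hsub (insert e X) Y
    have h2 : insert e X ∪ Y = insert e Y := by
      rw [Finset.insert_union, Finset.union_eq_right.2 h]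
    have h3 : insert e X ∩ Y = X := by
      rw [Finset.insert_inter_of_notMem he, Finset.inter_eq_left.2 h]
    rw [h2, h3] at h1
    linarith

theorem aux_tel {α : Type*} [LinearOrder α] (f : Finset α → ℝ) (hproper : f ∅ = 0)
    (S : Finset α) :
    f S = ∑ e ∈ S, (f (insert e (S.filter (fun x => x < e))) - f (S.filter (fun x => x < e))) := by
  induction S using Finset.induction_on_max with
  | empty => simp [hproper]
  | insert a s ha ih =>
    have hn : a ∉ s := fun h => lt_irrefl _ (ha a h)
    rw [Finset.sum_insert hn]
    have h1 : (insert a s).filter (fun x => x < a) = s := by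
      ext x
      simp only [Finset.mem_filter, Finset.mem_insert]
      constructor
      · rintro ⟨rfl | h, h2⟩
        · exact absurd h2 (lt_irrefl _)
        · exact h
      · exact fun h => ⟨Or.inr h, ha x h⟩
    have h2 : ∀ e ∈ s, (insert a s).filter (fun x => x < e) = s.filter (fun x => x < e) := by
      intro e he
      rw [Finset.filter_insert, if_neg (not_lt.2 (ha e he).le)]
    rw [h1, Finset.sum_congr rfl (fun e he => by rw [h2 e he]), ← ih]
    ring

theorem aux_add {α : Type*} [LinearOrder α] (f : Finset α → ℝ)
    (hsub : ∀ A B : Finset α, f (A ∪ B) + f (A ∩ B) ≤ f A + f B)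
    (hmono : ∀ A B : Finset α, A ⊆ B → f A ≤ f B)
    (B T : Finset α) : f (T ∪ B) ≤ f B + ∑ e ∈ T, (f (insert e B) - f B) := by
  induction T using Finset.induction_on with
  | empty => simp
  | insert a s ha ih =>
    rw [Finset.sum_insert ha, Finset.insert_union]
    linarith [aux_dim f hsub hmono B (s ∪ B) Finset.subset_union_right a]

/-- Lemma 3.4 (combinatorial form): the `f`-extension of an `F`-approximate
compliant algorithm with parameter `γ` computes a
`min{F + 1 + 1/γ, F/(1 − c)}`-approximate maximum submodular independent set,
where `c` is a curvature bound for `f`. -/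
theorem stmt_8 {α : Type*} [Fintype α] [LinearOrder α]
    (f : Finset α → ℝ)
    (hsub : ∀ A B : Finset α, f (A ∪ B) + f (A ∩ B) ≤ f A + f B)
    (hmono : ∀ A B : Finset α, A ⊆ B → f A ≤ f B)
    (hproper : f ∅ = 0)
    (hnonneg : ∀ A : Finset α, 0 ≤ f A)
    (C : α → Finset α)
    (hC : ∀ e, ∀ e' ∈ C e, e' < e)
    (I K : Finset α) (hdisj : Disjoint I K)
    (γ F c : ℝ) (hγ : 0 < γ) (hF : 0 ≤ F) (hc0 : 0 ≤ c) (hc1 : c < 1)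
    (T : Finset α)
    (hCB : ∀ e : α, C e ⊆ (I ∪ K).filter (fun e' => e' < e))
    (hI : ∀ e ∈ I, I.filter (fun e' => e' < e) ⊆ C e)
    (hK : ∑ e ∈ K, (f (insert e (C e)) - f (C e))
        ≤ (∑ e ∈ I, (f (insert e (C e)) - f (C e))) / γ)
    (hT : ∑ e ∈ T, (f (insert e (C e)) - f (C e))
        ≤ F * ∑ e ∈ I, (f (insert e (C e)) - f (C e)))
    (hcurv : ∀ (A : Finset α) (e : α), e ∉ A →
      (1 - c) * f {e} ≤ f (insert e A) - f A) :
    f T ≤ min (F + 1 + 1 / γ) (F / (1 - c)) * f I := by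
  have hd := aux_dim f hsub hmono
  have hwI : ∑ e ∈ I, (f (insert e (C e)) - f (C e)) ≤ f I := by
    rw [aux_tel f hproper I]
    exact Finset.sum_le_sum fun e he => hd _ _ (hI e he) e
  have hB : f (I ∪ K) ≤ ∑ e ∈ I ∪ K, (f (insert e (C e)) - f (C e)) := by
    rw [aux_tel f hproper (I ∪ K)]
    exact Finset.sum_le_sum fun e _ => hd _ _ (hCB e) e
  rw [Finset.sum_union hdisj] at hB
  have hTB : f T ≤ f (I ∪ K) + ∑ e ∈ T, (f (insert e (C e)) - f (C e)) := by
    have h1 := aux_add f hsub hmono (I ∪ K) T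
    have h2 : ∑ e ∈ T, (f (insert e (I ∪ K)) - f (I ∪ K))
        ≤ ∑ e ∈ T, (f (insert e (C e)) - f (C e)) :=
      Finset.sum_le_sum fun e _ => hd _ _ ((hCB e).trans (Finset.filter_subset _ _)) e
    linarith [hmono T (T ∪ (I ∪ K)) Finset.subset_union_left]
  have hTc : (1 - c) * f T ≤ ∑ e ∈ T, (f (insert e (C e)) - f (C e)) := by
    have h1 := aux_add f hsub hmono ∅ T
    simp only [Finset.union_empty, hproper, zero_add, sub_zero] at h1
    have h2 : (1 - c) * ∑ e ∈ T, f (insert e ∅)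
        ≤ ∑ e ∈ T, (f (insert e (C e)) - f (C e)) := by
      rw [Finset.mul_sum]
      exact Finset.sum_le_sum fun e _ => hcurv _ e fun h => lt_irrefl _ (hC e e h)
    exact (mul_le_mul_of_nonneg_left h1 (by linarith)).trans h2
  generalize ∑ e ∈ I, (f (insert e (C e)) - f (C e)) = wI at *
  generalize ∑ e ∈ T, (f (insert e (C e)) - f (C e)) = wT at *
  have hc : 0 < 1 - c := by linarith
  have hg : 0 < 1 / γ := by positivity
  rcases min_choice (F + 1 + 1 / γ) (F / (1 - c)) with h | h <;> rw [h]
  · have : (F + 1 + 1 / γ) * wI ≤ (F + 1 + 1 / γ) * f I :=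
      mul_le_mul_of_nonneg_left hwI (by linarith)
    have h3 : wI / γ = 1 / γ * wI := by ring
    linarith
  · rw [div_mul_eq_mul_div, le_div_iff₀ hc]
    linarith [mul_le_mul_of_nonneg_left hwI hF]
end

section
/- Let E be a finite type and f : Finset E → ℝ a nonnegative monotone proper submodular function. Then f satisfies f(A ∪ {e}) − f(A) ≥ f({e}) for every A ⊆ E and every e ∉ A if and only if f is modular, i.e., f(S) = ∑_{e∈S} f({e}) for every S ⊆ E. -/
/-- The paper's claim that `curv(f) = 0` iff `f` is modular: a nonnegative
monotone proper submodular function satisfies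
`f(A ∪ {e}) − f(A) ≥ f({e})` for all `A` and `e ∉ A` iff
`f(S) = ∑_{e∈S} f({e})` for every `S`. -/
theorem stmt_9 {α : Type*} [Fintype α] [DecidableEq α]
    (f : Finset α → ℝ)
    (hsub : ∀ A B : Finset α, f (A ∪ B) + f (A ∩ B) ≤ f A + f B)
    (hmono : ∀ A B : Finset α, A ⊆ B → f A ≤ f B)
    (hproper : f ∅ = 0)
    (hnonneg : ∀ A : Finset α, 0 ≤ f A) :
    (∀ (A : Finset α) (e : α), e ∉ A → f {e} ≤ f (insert e A) - f A) ↔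
      (∀ S : Finset α, f S = ∑ e ∈ S, f {e}) := by
  constructor
  · intro h S
    induction S using Finset.induction_on with
    | empty => simpa using hproper
    | insert e A he ih =>
      rw [Finset.sum_insert he, ← ih]
      have h1 := h A e he
      have h2 := hsub {e} A
      rw [← Finset.insert_eq, Finset.singleton_inter_of_notMem he, hproper] at h2
      linarith
  · intro h A e he
    have h1 := h (insert e A)
    rw [Finset.sum_insert he, ← h A] at h1
    linarith
end

section
/- Let V be a finite type, r ∈ V, and p : V → V a function with p(r) = r and such that for every v ∈ V there exists a natural number n with the n-fold iterate p^[n](v) = r (so (V, p, r) is a rooted tree with parent map p). For v ∈ V let the children of v be {u ∈ V : u ≠ v and p(u) = v}. Let w : V → ℝ be nonnegative and γ > 0 a real such that w(v) ≥ (1+γ)·∑_{u child of v} w(u) for every v ∈ V. Then ∑_{v ∈ V, v ≠ r} w(v) ≤ w(r)/γ. -/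
/-- Lemma 4.1 (combinatorial form, killing trees): in a rooted tree in which
the weight of each node is at least `(1+γ)` times the total weight of its
children, the total weight of the strict descendants of the root is at most
`1/γ` times the weight of the root. -/
theorem stmt_13 {V : Type*} [Fintype V] [DecidableEq V]
    (r : V) (p : V → V) (hpr : p r = r)
    (hreach : ∀ v : V, ∃ n : ℕ, p^[n] v = r)
    (w : V → ℝ) (hw : ∀ v, 0 ≤ w v)
    (γ : ℝ) (hγ : 0 < γ)
    (hkill : ∀ v : V,
      (1 + γ) * ∑ u ∈ Finset.univ.filter (fun u => u ≠ v ∧ p u = v), w u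
        ≤ w v) :
    ∑ v ∈ Finset.univ.filter (fun v => v ≠ r), w v ≤ w r / γ := by
  have hfix : ∀ u : V, p u = u → u = r := by
    intro u hu
    obtain ⟨n, hn⟩ := hreach u
    rw [Function.iterate_fixed hu n] at hn
    exact hn
  have hdouble : ∑ v, ∑ u ∈ Finset.univ.filter (fun u => u ≠ v ∧ p u = v), w u
      = ∑ v ∈ Finset.univ.filter (fun v => v ≠ r), w v := by
    simp only [Finset.sum_filter]
    rw [Finset.sum_comm]
    refine Finset.sum_congr rfl fun u _ => ?_
    rw [Finset.sum_eq_single (p u)]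
    · by_cases hu : u = r
      · subst hu
        simp [hpr]
      · have h : u ≠ p u := fun h => hu (hfix u h.symm)
        simp [hu, h]
    · intro v _ hv
      rw [if_neg]
      exact fun h => hv h.2.symm
    · simp
  have hsum := Finset.sum_le_sum (s := Finset.univ) (fun v _ => hkill v)
  rw [← Finset.mul_sum, hdouble] at hsum
  have hsplit : ∑ v, w v = w r + ∑ v ∈ Finset.univ.filter (fun v => v ≠ r), w v := by
    rw [Finset.filter_ne', Finset.add_sum_erase _ _ (Finset.mem_univ r)]
  rw [le_div_iff₀ hγ]
  rw [hsplit] at hsum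
  linarith
end

section
/- Let γ be a real with 0 < γ ≤ 1 and set κ := γ³/(2 + 3γ + γ² − γ³). Let O, W, B, F be nonnegative reals satisfying O ≤ (4 + 2/γ + 2γ)·W − (1 + 2/γ)·B, γ·(1+κ)·B ≥ (γ − κ)·W, and W ≤ F. Then O ≤ (3 + 3γ)·F. -/
/-- The arithmetic combination concluding the proof of Theorem 1.2: with
`κ = γ³/(2 + 3γ + γ² − γ³)`, if `O ≤ (4 + 2/γ + 2γ)W − (1 + 2/γ)B`,
`γ(1+κ)B ≥ (γ−κ)W`, and `W ≤ F`, then `O ≤ (3 + 3γ)F`. -/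
theorem stmt_16 (γ : ℝ) (hγ0 : 0 < γ) (hγ1 : γ ≤ 1)
    (O W B F : ℝ) (hO : 0 ≤ O) (hW : 0 ≤ W) (hB : 0 ≤ B) (hF : 0 ≤ F)
    (h1 : O ≤ (4 + 2 / γ + 2 * γ) * W - (1 + 2 / γ) * B)
    (h2 : (γ - γ ^ 3 / (2 + 3 * γ + γ ^ 2 - γ ^ 3)) * W
        ≤ γ * (1 + γ ^ 3 / (2 + 3 * γ + γ ^ 2 - γ ^ 3)) * B)
    (h3 : W ≤ F) :
    O ≤ (3 + 3 * γ) * F := by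
  have hD : 0 < 2 + 3 * γ + γ ^ 2 - γ ^ 3 := by
    have : γ ^ 3 ≤ 1 := pow_le_one₀ hγ0.le hγ1
    nlinarith [sq_nonneg γ]
  have e1 : γ - γ ^ 3 / (2 + 3 * γ + γ ^ 2 - γ ^ 3)
      = γ * (1 + γ) / (2 + 3 * γ + γ ^ 2 - γ ^ 3) * ((1 + γ) * (2 - γ)) := by
    rw [div_mul_eq_mul_div, eq_div_iff hD.ne', sub_mul, div_mul_cancel₀ _ hD.ne']
    ring
  have e2 : γ * (1 + γ ^ 3 / (2 + 3 * γ + γ ^ 2 - γ ^ 3))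
      = γ * (1 + γ) / (2 + 3 * γ + γ ^ 2 - γ ^ 3) * (2 + γ) := by
    rw [div_mul_eq_mul_div, eq_div_iff hD.ne', mul_assoc, add_mul, div_mul_cancel₀ _ hD.ne']
    ring
  rw [e1, e2, mul_assoc, mul_assoc] at h2
  have hc : 0 < γ * (1 + γ) / (2 + 3 * γ + γ ^ 2 - γ ^ 3) := by
    apply div_pos _ hD
    positivity
  have h4 : (1 + γ) * (2 - γ) * W ≤ (2 + γ) * B := by
    have := le_of_mul_le_mul_left (by simpa only [mul_assoc] using h2) hc
    linarith
  have h5 : (1 + γ) * (2 - γ) * W / γ ≤ (2 + γ) * B / γ :=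
    div_le_div_of_nonneg_right h4 hγ0.le
  have e3 : (1 + γ) * (2 - γ) * W / γ = (2 / γ + 1 - γ) * W := by
    field_simp
    ring
  have e4 : (2 + γ) * B / γ = (1 + 2 / γ) * B := by
    field_simp
    ring
  rw [e3, e4] at h5
  have h6 : O ≤ (3 + 3 * γ) * W := by linarith
  exact h6.trans (mul_le_mul_of_nonneg_left h3 (by positivity))
end
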